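/- Let a be an atom and C{ } a context. Every proof in the system KS of the formula C{a} can be transformed into a proof in KS of the formula C{t}. -/

import Mathlib

/-!
The idea is to trace the selected atom occurrence upwards through the proof, replacing it by `t`
on the way.  Let `Repl P P'` mean that `P'` arises from `P` by replacing some atom occurrences
by `t`.  Replacements in the conclusion of a derivation from `P` can be lifted to its premise:
for `Repl Q Q'` there is a `P'` with `Repl P P'` and a derivation from `P'` to `Q'`
(`Repl.lift_deriv`).  This holds because

* the laws of `Equiv` only permute formulas and move units, so `Repl` commutes with `Equiv`
  (`Repl.equiv`);
* switch and medial are linear, so the replacements are carried along; an atomic contraction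
  becomes `[t,t] = t`; an atomic weakening becomes a derivation `f → t`; an identity `t → [a,ā]`
  becomes `t = [t,f] → [t,ā]` or `t = [t,t]` (`Repl.lift_root`).

In a proof the topmost formula is `t`, which contains no atom, so there `P' = t`.
-/

/-!
Deep-inference systems SKSg, SKS and KS for classical propositional logic
(the calculus of structures).  Formulas are built from atoms `a`, their
negations `ā`, and the units `t` (true) and `f` (false) by disjunction
`[P,Q]` (`dis`) and conjunction `(P,Q)` (`con`), and are considered modulo
the congruence `Equiv` generated by associativity, commutativity and the
unit laws.  Rules apply inside an arbitrary one-hole context and modulo the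
equivalence.
-/

namespace DI

/-- Formulas of the calculus of structures for classical logic:
units `t`, `f`; atoms `pos a`; negated atoms `neg a`; disjunction `dis`
(written `[P,Q]`); conjunction `con` (written `(P,Q)`). -/
inductive F : Type where
  | tt  : F
  | ff  : F
  | pos : ℕ → F
  | neg : ℕ → F
  | dis : F → F → F
  | con : F → F → F
deriving DecidableEq

/-- Negation, pushed to the atoms by the De Morgan laws:
`¬t = f`, `¬f = t`, `¬[P,Q] = (¬P,¬Q)`, `¬(P,Q) = [¬P,¬Q]`, `¬¬P = P`. -/
def F.negF : F → F
  | .tt => .ff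
  | .ff => .tt
  | .pos a => .neg a
  | .neg a => .pos a
  | .dis P Q => .con P.negF Q.negF
  | .con P Q => .dis P.negF Q.negF

/-- Atoms are the propositional symbols and their negations. -/
def F.isAtom : F → Prop
  | .pos _ => True
  | .neg _ => True
  | _ => False

/-- Syntactic equivalence of formulas: the smallest congruence generated by
associativity and commutativity of both connectives and the unit laws
`[t,t]=t`, `(f,f)=f`, `[f,P]=P`, `(t,P)=P`. -/
inductive Equiv : F → F → Prop where
  | refl (P : F) : Equiv P P
  | symm {P Q : F} : Equiv P Q → Equiv Q P
  | trans {P Q R : F} : Equiv P Q → Equiv Q R → Equiv P R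
  | disComm (P Q : F) : Equiv (.dis P Q) (.dis Q P)
  | conComm (P Q : F) : Equiv (.con P Q) (.con Q P)
  | disAssoc (P Q R : F) : Equiv (.dis (.dis P Q) R) (.dis P (.dis Q R))
  | conAssoc (P Q R : F) : Equiv (.con (.con P Q) R) (.con P (.con Q R))
  | ttDis : Equiv (.dis .tt .tt) .tt
  | ffCon : Equiv (.con .ff .ff) .ff
  | ffDis (P : F) : Equiv (.dis .ff P) P
  | ttCon (P : F) : Equiv (.con .tt P) P
  | disCongr {P P' Q Q' : F} :
      Equiv P P' → Equiv Q Q' → Equiv (.dis P Q) (.dis P' Q')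
  | conCongr {P P' Q Q' : F} :
      Equiv P P' → Equiv Q Q' → Equiv (.con P Q) (.con P' Q')

/-- One-hole contexts. -/
inductive Ctx : Type where
  | hole : Ctx
  | disL : Ctx → F → Ctx
  | disR : F → Ctx → Ctx
  | conL : Ctx → F → Ctx
  | conR : F → Ctx → Ctx

/-- Plugging a formula into the hole of a context. -/
def Ctx.fill : Ctx → F → F
  | .hole, P => P
  | .disL C Q, P => .dis (C.fill P) Q
  | .disR Q C, P => .dis Q (C.fill P)
  | .conL C Q, P => .con (C.fill P) Q
  | .conR Q C, P => .con Q (C.fill P)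

/-- Names of the inference rules of SKSg and SKS. -/
inductive Rule : Type where
  | iDown | iUp | wDown | wUp | cDown | cUp | s | m
  | aiDown | aiUp | awDown | awUp | acDown | acUp
deriving DecidableEq

/-- The rules, read at the root of a formula (premise on the left,
conclusion on the right). -/
inductive RootStep : Rule → F → F → Prop where
  | iDown (P : F) : RootStep .iDown .tt (.dis P P.negF)
  | iUp (P : F) : RootStep .iUp (.con P P.negF) .ff
  | wDown (P : F) : RootStep .wDown .ff P
  | wUp (P : F) : RootStep .wUp P .tt
  | cDown (P : F) : RootStep .cDown (.dis P P) P
  | cUp (P : F) : RootStep .cUp P (.con P P)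
  | s (P Q R : F) : RootStep .s (.con P (.dis Q R)) (.dis (.con P Q) R)
  | m (P Q R S : F) :
      RootStep .m (.dis (.con P Q) (.con R S)) (.con (.dis P R) (.dis Q S))
  | aiDown (A : F) (h : A.isAtom) : RootStep .aiDown .tt (.dis A A.negF)
  | aiUp (A : F) (h : A.isAtom) : RootStep .aiUp (.con A A.negF) .ff
  | awDown (A : F) (h : A.isAtom) : RootStep .awDown .ff A
  | awUp (A : F) (h : A.isAtom) : RootStep .awUp A .tt
  | acDown (A : F) (h : A.isAtom) : RootStep .acDown (.dis A A) A
  | acUp (A : F) (h : A.isAtom) : RootStep .acUp A (.con A A)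

/-- One inference step using a rule from the set `Rs`, applied inside an
arbitrary context and modulo the equivalence. -/
def Step (Rs : Set Rule) (P Q : F) : Prop :=
  ∃ r ∈ Rs, ∃ (C : Ctx) (P' Q' : F),
    RootStep r P' Q' ∧ Equiv P (C.fill P') ∧ Equiv (C.fill Q') Q

/-- Derivations over an arbitrary step relation: a finite sequence of rule
instances from the premise to the conclusion (modulo the equivalence). -/
inductive Deriv (St : F → F → Prop) : F → F → Prop where
  | eqv {P Q : F} : Equiv P Q → Deriv St P Q
  | step {P Q R : F} : St P Q → Deriv St Q R → Deriv St P R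

/-- The system SKSg: general (non-atomic) rules plus switch. -/
def SKSg : Set Rule := {.iDown, .iUp, .wDown, .wUp, .cDown, .cUp, .s}

/-- The system SKS: atomic rules plus switch and medial. -/
def SKS : Set Rule := {.aiDown, .aiUp, .awDown, .awUp, .acDown, .acUp, .s, .m}

/-- The system KS: the down fragment of SKS. -/
def KS : Set Rule := {.aiDown, .awDown, .acDown, .s, .m}

/-- A proof of `Q` in the system `Rs` is a derivation from the unit `t` to `Q`. -/
def Proof (Rs : Set Rule) (Q : F) : Prop := Deriv (Step Rs) .tt Q

/-- A rule `r` is derivable from a set `Rs` of rules if every instance of `r`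
(with premise `P` and conclusion `Q`) can be replaced by a derivation from
`P` to `Q` using only rules of `Rs`. -/
def RuleDerivable (r : Rule) (Rs : Set Rule) : Prop :=
  ∀ P Q : F, Step {r} P Q → Deriv (Step Rs) P Q

end DI


namespace DI

/-! ### Replacing atom occurrences by `t` -/

/-- `Repl P P'`: the formula `P'` is obtained from `P` by replacing some (possibly none, possibly
all) occurrences of atoms by the unit `t`.  Arbitrary atoms are allowed, which is harmless and
makes the relation independent of the atom under consideration. -/
inductive Repl : F → F → Prop where
  | tt : Repl .tt .tt
  | ff : Repl .ff .ff
  | pos (a : ℕ) : Repl (.pos a) (.pos a)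
  | neg (a : ℕ) : Repl (.neg a) (.neg a)
  | posT (a : ℕ) : Repl (.pos a) .tt
  | negT (a : ℕ) : Repl (.neg a) .tt
  | dis {P P' Q Q' : F} : Repl P P' → Repl Q Q' → Repl (.dis P Q) (.dis P' Q')
  | con {P P' Q Q' : F} : Repl P P' → Repl Q Q' → Repl (.con P Q) (.con P' Q')

theorem Repl.rfl : ∀ P : F, Repl P P
  | .tt => .tt
  | .ff => .ff
  | .pos a => .pos a
  | .neg a => .neg a
  | .dis P Q => .dis (Repl.rfl P) (Repl.rfl Q)
  | .con P Q => .con (Repl.rfl P) (Repl.rfl Q)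

theorem Repl.fill {P P' : F} (h : Repl P P') (C : Ctx) : Repl (C.fill P) (C.fill P') := by
  induction C with
  | hole => exact h
  | disL C Q ih => exact .dis ih (.rfl Q)
  | disR Q C ih => exact .dis (.rfl Q) ih
  | conL C Q ih => exact .con ih (.rfl Q)
  | conR Q C ih => exact .con (.rfl Q) ih

/-- Replacements commute with the equivalence.  Both directions are proved together because of
the symmetry rule of `Equiv`. -/
theorem Repl.equiv {P Q : F} (h : Equiv P Q) :
    (∀ P', Repl P P' → ∃ Q', Repl Q Q' ∧ Equiv P' Q') ∧
    (∀ Q', Repl Q Q' → ∃ P', Repl P P' ∧ Equiv P' Q') := by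
  induction h with
  | refl P => exact ⟨fun P' h => ⟨P', h, .refl _⟩, fun P' h => ⟨P', h, .refl _⟩⟩
  | symm _ ih =>
    refine ⟨fun P' h => ?_, fun P' h => ?_⟩
    · obtain ⟨Q', h₁, h₂⟩ := ih.2 P' h
      exact ⟨Q', h₁, h₂.symm⟩
    · obtain ⟨Q', h₁, h₂⟩ := ih.1 P' h
      exact ⟨Q', h₁, h₂.symm⟩
  | trans _ _ ih₁ ih₂ =>
    refine ⟨fun P' h => ?_, fun P' h => ?_⟩
    · obtain ⟨Q', h₁, h₂⟩ := ih₁.1 P' h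
      obtain ⟨R', h₃, h₄⟩ := ih₂.1 Q' h₁
      exact ⟨R', h₃, h₂.trans h₄⟩
    · obtain ⟨Q', h₁, h₂⟩ := ih₂.2 P' h
      obtain ⟨R', h₃, h₄⟩ := ih₁.2 Q' h₁
      exact ⟨R', h₃, h₄.trans h₂⟩
  | disComm P Q =>
    constructor <;> rintro _ (_ | _ | _ | _ | _ | _ | ⟨h₁, h₂⟩ | _) <;>
      exact ⟨_, .dis h₂ h₁, .disComm _ _⟩
  | conComm P Q =>
    constructor <;> rintro _ (_ | _ | _ | _ | _ | _ | _ | ⟨h₁, h₂⟩) <;>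
      exact ⟨_, .con h₂ h₁, .conComm _ _⟩
  | disAssoc P Q R =>
    constructor
    · intro _ h
      cases h with | dis h h₃ => cases h with | dis h₁ h₂ =>
      exact ⟨_, .dis h₁ (.dis h₂ h₃), .disAssoc _ _ _⟩
    · intro _ h
      cases h with | dis h₁ h => cases h with | dis h₂ h₃ =>
      exact ⟨_, .dis (.dis h₁ h₂) h₃, .disAssoc _ _ _⟩
  | conAssoc P Q R =>
    constructor
    · intro _ h
      cases h with | con h h₃ => cases h with | con h₁ h₂ =>
      exact ⟨_, .con h₁ (.con h₂ h₃), .conAssoc _ _ _⟩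
    · intro _ h
      cases h with | con h₁ h => cases h with | con h₂ h₃ =>
      exact ⟨_, .con (.con h₁ h₂) h₃, .conAssoc _ _ _⟩
  | ttDis =>
    constructor
    · intro _ h
      cases h with | dis h₁ h₂ => cases h₁; cases h₂; exact ⟨_, .tt, .ttDis⟩
    · intro _ h
      cases h; exact ⟨_, .dis .tt .tt, .ttDis⟩
  | ffCon =>
    constructor
    · intro _ h
      cases h with | con h₁ h₂ => cases h₁; cases h₂; exact ⟨_, .ff, .ffCon⟩
    · intro _ h
      cases h; exact ⟨_, .con .ff .ff, .ffCon⟩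
  | ffDis P =>
    constructor
    · intro _ h
      cases h with | dis h₁ h₂ => cases h₁; exact ⟨_, h₂, .ffDis _⟩
    · intro _ h
      exact ⟨_, .dis .ff h, .ffDis _⟩
  | ttCon P =>
    constructor
    · intro _ h
      cases h with | con h₁ h₂ => cases h₁; exact ⟨_, h₂, .ttCon _⟩
    · intro _ h
      exact ⟨_, .con .tt h, .ttCon _⟩
  | disCongr _ _ ih₁ ih₂ =>
    constructor
    · intro _ h
      cases h with | dis h₁ h₂ =>
      obtain ⟨_, a, b⟩ := ih₁.1 _ h₁
      obtain ⟨_, c, d⟩ := ih₂.1 _ h₂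
      exact ⟨_, .dis a c, .disCongr b d⟩
    · intro _ h
      cases h with | dis h₁ h₂ =>
      obtain ⟨_, a, b⟩ := ih₁.2 _ h₁
      obtain ⟨_, c, d⟩ := ih₂.2 _ h₂
      exact ⟨_, .dis a c, .disCongr b d⟩
  | conCongr _ _ ih₁ ih₂ =>
    constructor
    · intro _ h
      cases h with | con h₁ h₂ =>
      obtain ⟨_, a, b⟩ := ih₁.1 _ h₁
      obtain ⟨_, c, d⟩ := ih₂.1 _ h₂
      exact ⟨_, .con a c, .conCongr b d⟩
    · intro _ h
      cases h with | con h₁ h₂ =>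
      obtain ⟨_, a, b⟩ := ih₁.2 _ h₁
      obtain ⟨_, c, d⟩ := ih₂.2 _ h₂
      exact ⟨_, .con a c, .conCongr b d⟩

/-! ### Derivations inside contexts -/

theorem Equiv.fill {P Q : F} (h : Equiv P Q) (C : Ctx) : Equiv (C.fill P) (C.fill Q) := by
  induction C with
  | hole => exact h
  | disL C Q ih => exact .disCongr ih (.refl Q)
  | disR Q C ih => exact .disCongr (.refl Q) ih
  | conL C Q ih => exact .conCongr ih (.refl Q)
  | conR Q C ih => exact .conCongr (.refl Q) ih

/-- Composition of contexts: `C.comp D` is `C{D{ }}`. -/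
def Ctx.comp : Ctx → Ctx → Ctx
  | .hole, D => D
  | .disL C Q, D => .disL (C.comp D) Q
  | .disR Q C, D => .disR Q (C.comp D)
  | .conL C Q, D => .conL (C.comp D) Q
  | .conR Q C, D => .conR Q (C.comp D)

theorem Ctx.fill_comp (C D : Ctx) (P : F) : (C.comp D).fill P = C.fill (D.fill P) := by
  induction C <;> simp_all [Ctx.comp, Ctx.fill]

theorem Step.fill {Rs : Set Rule} {P Q : F} (h : Step Rs P Q) (C : Ctx) :
    Step Rs (C.fill P) (C.fill Q) := by
  obtain ⟨r, hr, D, P', Q', hs, h₁, h₂⟩ := h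
  refine ⟨r, hr, C.comp D, P', Q', hs, ?_, ?_⟩
  · rw [Ctx.fill_comp]; exact h₁.fill C
  · rw [Ctx.fill_comp]; exact h₂.fill C

theorem Deriv.fill {Rs : Set Rule} {P Q : F} (h : Deriv (Step Rs) P Q) (C : Ctx) :
    Deriv (Step Rs) (C.fill P) (C.fill Q) := by
  induction h with
  | eqv h => exact .eqv (h.fill C)
  | step h _ ih => exact .step (h.fill C) ih

theorem Deriv.equiv_left {Rs : Set Rule} {P Q R : F} (e : Equiv P Q)
    (h : Deriv (Step Rs) Q R) : Deriv (Step Rs) P R := by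
  cases h with
  | eqv h => exact .eqv (e.trans h)
  | step h h' =>
    obtain ⟨r, hr, D, P', Q', hs, h₁, h₂⟩ := h
    exact .step ⟨r, hr, D, P', Q', hs, e.trans h₁, h₂⟩ h'

theorem Deriv.trans {Rs : Set Rule} {P Q R : F} (h : Deriv (Step Rs) P Q)
    (h' : Deriv (Step Rs) Q R) : Deriv (Step Rs) P R := by
  induction h with
  | eqv e => exact h'.equiv_left e
  | step h _ ih => exact .step h (ih h')

theorem Deriv.of_root {Rs : Set Rule} {r : Rule} (hr : r ∈ Rs) {P Q : F}
    (h : RootStep r P Q) : Deriv (Step Rs) P Q :=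
  .step ⟨r, hr, .hole, P, Q, h, .refl _, .refl _⟩ (.eqv (.refl _))

/-! ### Derivations replacing weakenings and identities -/

/-- `f = (f,[t,t]) → [(f,t),t] = t`, by a single switch. -/
theorem ff_to_tt : Deriv (Step KS) .ff .tt := by
  have e₁ : Equiv .ff (.con .ff (.dis .tt .tt)) :=
    (((Equiv.refl F.ff).conCongr .ttDis).trans
      ((Equiv.conComm _ _).trans (.ttCon _))).symm
  have e₂ : Equiv (.dis (.con .ff .tt) .tt) .tt :=
    (((Equiv.conComm F.ff .tt).trans (.ttCon _)).disCongr (.refl _)).trans (.ffDis _)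
  exact .step ⟨.s, by simp [KS], .hole, _, _, .s .ff .tt .tt, e₁, e₂⟩ (.eqv (.refl _))

/-- `t = [t,f] → [t,A]` by weakening. -/
theorem tt_to_tt_dis {A : F} (hA : A.isAtom) : Deriv (Step KS) .tt (.dis .tt A) :=
  Deriv.equiv_left (Q := .dis .tt .ff) ((Equiv.disComm _ _).trans (.ffDis _)).symm
    ((Deriv.of_root (by simp [KS]) (.awDown A hA)).fill (.disR .tt .hole))

theorem tt_to_dis_tt {A : F} (hA : A.isAtom) : Deriv (Step KS) .tt (.dis A .tt) :=
  (tt_to_tt_dis hA).trans (.eqv (.disComm _ _))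

/-! ### Lifting replacements through derivations -/

theorem F.isAtom.negF {A : F} (hA : A.isAtom) : A.negF.isAtom := by
  cases A <;> simp_all [F.isAtom, F.negF]

theorem Repl.of_isAtom {A : F} (hA : A.isAtom) : Repl A .tt := by
  cases A with
  | pos a => exact .posT a
  | neg a => exact .negT a
  | _ => exact hA.elim

theorem Repl.atom_cases {A A' : F} (hA : A.isAtom) (h : Repl A A') : A' = A ∨ A' = .tt := by
  cases h <;> simp_all [F.isAtom]

theorem Repl.lift_root {r : Rule} (hr : r ∈ KS) {P Q Q' : F} (hs : RootStep r P Q)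
    (h : Repl Q Q') : ∃ P', Repl P P' ∧ Deriv (Step KS) P' Q' := by
  cases hs with
  | s P Q R =>
    cases h with | dis h h₃ => cases h with | con h₁ h₂ =>
    exact ⟨_, .con h₁ (.dis h₂ h₃), .of_root hr (.s _ _ _)⟩
  | m P Q R S =>
    cases h with | con h h' =>
    cases h with | dis h₁ h₂ => cases h' with | dis h₃ h₄ =>
    exact ⟨_, .dis (.con h₁ h₃) (.con h₂ h₄), .of_root hr (.m _ _ _ _)⟩
  | aiDown A hA =>
    refine ⟨.tt, .tt, ?_⟩
    cases h with | dis h₁ h₂ =>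
    obtain rfl | rfl := h₁.atom_cases hA <;> obtain rfl | rfl := h₂.atom_cases hA.negF
    · exact .of_root hr (.aiDown _ hA)
    · exact tt_to_dis_tt hA
    · exact tt_to_tt_dis hA.negF
    · exact .eqv (.symm .ttDis)
  | awDown _ hA =>
    refine ⟨.ff, .ff, ?_⟩
    obtain rfl | rfl := h.atom_cases hA
    · exact .of_root hr (.awDown _ hA)
    · exact ff_to_tt
  | acDown _ hA =>
    refine ⟨_, .dis h h, ?_⟩
    obtain rfl | rfl := h.atom_cases hA
    · exact .of_root hr (.acDown _ hA)
    · exact .eqv .ttDis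
  | _ => simp [KS] at hr

theorem Repl.lift_fill {P Q : F}
    (H : ∀ Q', Repl Q Q' → ∃ P', Repl P P' ∧ Deriv (Step KS) P' Q') (C : Ctx) :
    ∀ R', Repl (C.fill Q) R' → ∃ P', Repl (C.fill P) P' ∧ Deriv (Step KS) P' R' := by
  induction C with
  | hole => exact H
  | disL C R ih =>
    intro _ h
    cases h with | dis h₁ h₂ =>
    obtain ⟨_, a, b⟩ := ih _ h₁
    exact ⟨_, .dis a h₂, b.fill (.disL .hole _)⟩
  | disR R C ih =>
    intro _ h
    cases h with | dis h₁ h₂ =>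
    obtain ⟨_, a, b⟩ := ih _ h₂
    exact ⟨_, .dis h₁ a, b.fill (.disR _ .hole)⟩
  | conL C R ih =>
    intro _ h
    cases h with | con h₁ h₂ =>
    obtain ⟨_, a, b⟩ := ih _ h₁
    exact ⟨_, .con a h₂, b.fill (.conL .hole _)⟩
  | conR R C ih =>
    intro _ h
    cases h with | con h₁ h₂ =>
    obtain ⟨_, a, b⟩ := ih _ h₂
    exact ⟨_, .con h₁ a, b.fill (.conR _ .hole)⟩

/-- Replacements in the conclusion of a KS derivation can be traced back to replacements in its
premise. -/
theorem Repl.lift_deriv {P Q : F} (d : Deriv (Step KS) P Q) :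
    ∀ Q', Repl Q Q' → ∃ P', Repl P P' ∧ Deriv (Step KS) P' Q' := by
  induction d with
  | eqv e =>
    intro Q' h
    obtain ⟨P', h₁, h₂⟩ := (Repl.equiv e).2 Q' h
    exact ⟨P', h₁, .eqv h₂⟩
  | step st _ ih =>
    intro R' h
    obtain ⟨Q', hQ, dQ⟩ := ih R' h
    obtain ⟨r, hr, C, P₀, Q₀, hs, e₁, e₂⟩ := st
    obtain ⟨Q₁, hQ₁, e₃⟩ := (Repl.equiv e₂).2 Q' hQ
    obtain ⟨P₁, hP₁, d₁⟩ := Repl.lift_fill (fun _ h => Repl.lift_root hr hs h) C Q₁ hQ₁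
    obtain ⟨P', hP', e₄⟩ := (Repl.equiv e₁).2 P₁ hP₁
    exact ⟨P', hP', (d₁.equiv_left e₄).trans (dQ.equiv_left e₃)⟩

/-- Let `a` be an atom and `C{ }` a context.  Every proof in the system KS of
`C{a}` can be transformed into a proof in KS of `C{t}`. -/
theorem ks_atom_to_true (A : F) (hA : A.isAtom) (C : Ctx)
    (h : Proof KS (C.fill A)) : Proof KS (C.fill .tt) := by
  obtain ⟨P', hP, d⟩ := Repl.lift_deriv h _ ((Repl.of_isAtom hA).fill C)
  cases hP
  exact d

end DI
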